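/- Let κ be regular and κ ≤ θ₁ ≤ θ₂ cardinals. If the Baire number 𝔫_κ^{θ₂} of (2^{θ₂})_κ equals θ₁, then 𝔫_κ^{θ₁} = θ₁. -/

import Mathlib

open Cardinal Set

universe u

/-- `ExtFn q p` : the partial function `q` extends `p`. -/
def ExtFn {θ : Type u} (q p : θ → Option Bool) : Prop :=
  ∀ x b, p x = some b → q x = some b

/-- `Fn κ θ` : partial functions `θ → 2` of size `< κ`. -/
def Fn (κ : Cardinal.{u}) (θ : Type u) : Set (θ → Option Bool) :=
  {p | #{x | p x ≠ none} < κ}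

/-- The basic open set determined by a condition `p`. -/
def cylinder {θ : Type u} (p : θ → Option Bool) : Set (θ → Bool) :=
  {f | ∀ x b, p x = some b → f x = b}

/-- The topology of the space `(2^θ)_κ`. -/
def kTop (κ : Cardinal.{u}) (θ : Type u) : TopologicalSpace (θ → Bool) :=
  TopologicalSpace.generateFrom {U | ∃ p ∈ Fn κ θ, U = cylinder p}

/-- The Baire number of the space `(2^θ)_κ` : the least cardinality of a family of
dense open sets with empty intersection. -/
noncomputable def spaceBaire (κ : Cardinal.{u}) (θ : Type u) : Cardinal.{u} :=
  sInf {c | ∃ F : Set (Set (θ → Bool)), #F = c ∧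
    (∀ U ∈ F, @IsOpen _ (kTop κ θ) U ∧ @Dense _ (kTop κ θ) U) ∧ ⋂₀ F = ∅}

/-- `𝔫_κ^θ` for cardinals `κ ≤ θ`. -/
noncomputable def nBaire (κ θ : Cardinal.{u}) : Cardinal.{u} :=
  spaceBaire κ θ.out

/-- Density and openness in `(2^θ)_κ`, expressed through restrictions of total functions. -/
def IsDenseOpen (κ : Cardinal.{u}) {θ : Type u} (U : Set (θ → Bool)) : Prop :=
  (∀ f ∈ U, ∃ s : Set θ, #s < κ ∧ ∀ g, EqOn g f s → g ∈ U) ∧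
    ∀ (f : θ → Bool) (s : Set θ), #s < κ → ∃ g ∈ U, EqOn g f s

theorem isOpen_cylinder {κ : Cardinal.{u}} {θ : Type u} {p : θ → Option Bool}
    (hp : p ∈ Fn κ θ) : @IsOpen _ (kTop κ θ) (cylinder p) :=
  TopologicalSpace.isOpen_generateFrom_of_mem ⟨p, hp, rfl⟩

theorem isOpen_setOf_eqOn {κ : Cardinal.{u}} {θ : Type u} (f : θ → Bool) {s : Set θ}
    (hs : #s < κ) : @IsOpen _ (kTop κ θ) {g | EqOn g f s} := by
  classical
  have hp : (fun x => if x ∈ s then some (f x) else none) ∈ Fn κ θ := by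
    have : {x | (if x ∈ s then some (f x) else none) ≠ none} = s := by ext x; simp
    change #{x | (if x ∈ s then some (f x) else none) ≠ none} < κ
    rwa [this]
  convert isOpen_cylinder hp using 1
  ext g
  constructor
  · intro hg x b hx
    by_cases h : x ∈ s
    · simp only [h, if_true, Option.some.injEq] at hx
      rw [hg h, hx]
    · simp [h] at hx
  · intro hg x hx
    exact hg x (f x) (by simp [hx])

theorem isOpen_kTop_iff {κ : Cardinal.{u}} (hκ : ℵ₀ ≤ κ) {θ : Type u} {U : Set (θ → Bool)} :
    @IsOpen _ (kTop κ θ) U ↔ ∀ f ∈ U, ∃ s : Set θ, #s < κ ∧ ∀ g, EqOn g f s → g ∈ U := by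
  constructor
  · intro hU
    induction hU with
    | basic V hV =>
      obtain ⟨p, hp, rfl⟩ := hV
      intro f hf
      refine ⟨{x | p x ≠ none}, hp, fun g hg x b hx => ?_⟩
      rw [hg (show p x ≠ none by simp [hx]), hf x b hx]
    | univ => exact fun f _ => ⟨∅, by simpa using aleph0_pos.trans_le hκ, fun _ _ => trivial⟩
    | inter V W _ _ hV hW =>
      rintro f ⟨hfV, hfW⟩
      obtain ⟨s, hs, hsV⟩ := hV f hfV
      obtain ⟨t, ht, htW⟩ := hW f hfW
      exact ⟨s ∪ t, (mk_union_le s t).trans_lt (add_lt_of_lt hκ hs ht), fun g hg =>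
        ⟨hsV g (hg.mono subset_union_left), htW g (hg.mono subset_union_right)⟩⟩
    | sUnion S _ hS =>
      rintro f ⟨V, hV, hfV⟩
      obtain ⟨s, hs, hsV⟩ := hS V hV f hfV
      exact ⟨s, hs, fun g hg => ⟨V, hV, hsV g hg⟩⟩
  · intro h
    let := kTop κ θ
    refine isOpen_iff_mem_nhds.2 fun f hf => ?_
    obtain ⟨s, hs, hU⟩ := h f hf
    exact Filter.mem_of_superset
      ((isOpen_setOf_eqOn f hs).mem_nhds (show f ∈ {g | EqOn g f s} from fun _ _ => rfl)) hU

theorem isDenseOpen_iff {κ : Cardinal.{u}} (hκ : ℵ₀ ≤ κ) {θ : Type u} {U : Set (θ → Bool)} :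
    IsDenseOpen κ U ↔ @IsOpen _ (kTop κ θ) U ∧ @Dense _ (kTop κ θ) U := by
  let := kTop κ θ
  refine and_congr (isOpen_kTop_iff hκ).symm ⟨fun h => ?_, fun h f s hs => ?_⟩
  · refine dense_iff_inter_open.2 fun V hV ⟨f, hf⟩ => ?_
    obtain ⟨s, hs, hsV⟩ := (isOpen_kTop_iff hκ).1 hV f hf
    obtain ⟨g, hg, hgf⟩ := h f s hs
    exact ⟨g, hsV g hgf, hg⟩
  · obtain ⟨g, hg, hgU⟩ := dense_iff_inter_open.1 h _ (isOpen_setOf_eqOn f hs)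
      ⟨f, fun _ _ => rfl⟩
    exact ⟨g, hgU, hg⟩

theorem IsDenseOpen.exists_extension {κ : Cardinal.{u}} (hκ : ℵ₀ ≤ κ) {θ : Type u}
    {U : Set (θ → Bool)} (hU : IsDenseOpen κ U) (f : θ → Bool) (s : Set θ) (hs : #s < κ) :
    ∃ (g : θ → Bool) (t : Set θ), #t < κ ∧ s ⊆ t ∧ EqOn g f s ∧ ∀ h, EqOn h g t → h ∈ U := by
  obtain ⟨g, hg, hgf⟩ := hU.2 f s hs
  obtain ⟨t, ht, htU⟩ := hU.1 g hg
  exact ⟨g, s ∪ t, (mk_union_le s t).trans_lt (add_lt_of_lt hκ hs ht), subset_union_left, hgf,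
    fun h hh => htU h (hh.mono subset_union_right)⟩

theorem isDenseOpen_compl_singleton {κ : Cardinal.{u}} (hκ : ℵ₀ ≤ κ) {θ : Type u} (hθ : κ ≤ #θ)
    (f : θ → Bool) : IsDenseOpen κ ({f}ᶜ : Set (θ → Bool)) := by
  classical
  constructor
  · intro g hg
    obtain ⟨x, hx⟩ := Function.ne_iff.1 hg
    refine ⟨{x}, by simpa using one_lt_aleph0.trans_le hκ, fun h hh hf => hx ?_⟩
    rw [← hh rfl, hf]
  · intro g s hs
    obtain ⟨x, hx⟩ : ∃ x, x ∉ s := by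
      by_contra! h
      rw [eq_univ_of_forall h, mk_univ] at hs
      exact hs.not_ge hθ
    refine ⟨Function.update g x (!f x), fun h => ?_, fun y hy => ?_⟩
    · simpa using congrFun h x
    · exact Function.update_of_ne (ne_of_mem_of_not_mem hy hx) _ _

/-- The family attaining `spaceBaire κ θ`. -/
theorem exists_family_eq_spaceBaire {κ : Cardinal.{u}} (hκ : ℵ₀ ≤ κ) {θ : Type u}
    (hθ : κ ≤ #θ) :
    ∃ F : Set (Set (θ → Bool)), #F = spaceBaire κ θ ∧ (∀ U ∈ F, IsDenseOpen κ U) ∧ ⋂₀ F = ∅ := by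
  simp_rw [isDenseOpen_iff hκ]
  refine csInf_mem (s := {c | ∃ F : Set (Set (θ → Bool)), #F = c ∧
    (∀ U ∈ F, @IsOpen _ (kTop κ θ) U ∧ @Dense _ (kTop κ θ) U) ∧ ⋂₀ F = ∅})
    ⟨_, range fun f : θ → Bool => {f}ᶜ, rfl, ?_, ?_⟩
  · rintro _ ⟨f, rfl⟩
    exact (isDenseOpen_iff hκ).1 (isDenseOpen_compl_singleton hκ hθ f)
  · refine eq_empty_of_forall_notMem fun f hf => ?_
    exact hf _ ⟨f, rfl⟩ rfl

theorem spaceBaire_le {κ : Cardinal.{u}} (hκ : ℵ₀ ≤ κ) {θ ι : Type u} (U : ι → Set (θ → Bool))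
    (hU : ∀ i, IsDenseOpen κ (U i)) (hU' : ⋂ i, U i = ∅) : spaceBaire κ θ ≤ #ι := by
  have hle : spaceBaire κ θ ≤ #(range U) := by
    refine csInf_le' ⟨range U, rfl, ?_, by rwa [sInter_range]⟩
    rintro _ ⟨i, rfl⟩
    exact (isDenseOpen_iff hκ).1 (hU i)
  exact hle.trans mk_range_le

theorem IsDenseOpen.preimage_comp {κ : Cardinal.{u}} {θ θ' : Type u} {j : θ → θ'}
    (hj : Function.Injective j) {U : Set (θ → Bool)} (hU : IsDenseOpen κ U) :
    IsDenseOpen κ {f : θ' → Bool | f ∘ j ∈ U} := by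
  constructor
  · intro f hf
    obtain ⟨s, hs, hsU⟩ := hU.1 _ hf
    exact ⟨j '' s, mk_image_le.trans_lt hs,
      fun g hg => hsU _ fun x hx => hg (mem_image_of_mem j hx)⟩
  · intro f s hs
    obtain ⟨g, hg, hgf⟩ := hU.2 (f ∘ j) (j ⁻¹' s) ((mk_preimage_of_injective j s hj).trans_lt hs)
    refine ⟨Function.extend j g f, ?_, fun y hy => ?_⟩
    · rwa [mem_ofPred_eq, Function.extend_comp hj]
    · by_cases h : ∃ x, j x = y
      · obtain ⟨x, rfl⟩ := h
        rw [hj.extend_apply]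
        exact hgf hy
      · exact Function.extend_apply' _ _ _ h

theorem spaceBaire_le_of_injective {κ : Cardinal.{u}} (hκ : ℵ₀ ≤ κ) {θ θ' ι : Type u} {j : θ → θ'}
    (hj : Function.Injective j) (U : ι → Set (θ → Bool))
    (hU : ∀ i, IsDenseOpen κ (U i)) (hU' : ⋂ i, U i = ∅) : spaceBaire κ θ' ≤ #ι := by
  refine spaceBaire_le hκ _ (fun i => (hU i).preimage_comp hj) ?_
  refine eq_empty_of_forall_notMem fun f hf => ?_
  have : f ∘ j ∈ ⋂ i, U i := mem_iInter.2 fun i => mem_iInter.1 hf i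
  rwa [hU'] at this

/-- Union of a family of conditions; meaningful when they are pairwise compatible. -/
noncomputable def glue {θ J : Type u} (c : J → (θ → Bool) × Set θ) : (θ → Bool) × Set θ :=
  open Classical in
  (fun x => if h : ∃ j, x ∈ (c j).2 then (c h.choose).1 x else false, ⋃ j, (c j).2)

theorem glue_eqOn {θ J : Type u} {c : J → (θ → Bool) × Set θ}
    (hc : ∀ j k x, x ∈ (c j).2 → x ∈ (c k).2 → (c j).1 x = (c k).1 x) (j : J) :
    EqOn (glue c).1 (c j).1 (c j).2 := by
  intro x hx
  have h : ∃ j, x ∈ (c j).2 := ⟨j, hx⟩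
  simp only [glue, dif_pos h]
  exact hc _ _ _ h.choose_spec hx

/-- The Baire category theorem for `(2^θ)_κ`: at most `κ` dense open sets have a common point. -/
theorem nonempty_iInter_of_isDenseOpen {κ : Cardinal.{u}} (hκ : κ.IsRegular) {θ ι : Type u}
    (hι : #ι ≤ κ) {U : ι → Set (θ → Bool)} (hU : ∀ i, IsDenseOpen κ (U i)) :
    (⋂ i, U i).Nonempty := by
  obtain ⟨r, _, hr⟩ := exists_ord_eq ι
  have hseg (i : ι) : #{j // r j i} < κ := (card_typein_lt i hr).trans_le hι
  choose g t ht hst hgf hgU using fun i => (hU i).exists_extension hκ.aleph0_le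
  classical
  let step (i : ι) (p : (θ → Bool) × Set θ) : (θ → Bool) × Set θ :=
    if h : #p.2 < κ then (g i p.1 p.2 h, t i p.1 p.2 h) else p
  have wf : WellFounded r := IsWellFounded.wf
  let c : ι → (θ → Bool) × Set θ :=
    wf.fix fun i ih => step i (glue fun j : {j // r j i} => ih j j.2)
  have hc (i : ι) : c i = step i (glue fun j : {j // r j i} => c j) := wf.fix_eq _ i
  have agree {P : ι → Prop} (H : ∀ i, P i → ∀ j, r j i → EqOn (c i).1 (c j).1 (c j).2)
      (j k : ι) (hj : P j) (hk : P k) (x : θ) (hxj : x ∈ (c j).2) (hxk : x ∈ (c k).2) :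
      (c j).1 x = (c k).1 x := by
    rcases trichotomous_of r j k with h | rfl | h
    · exact (H k hk j h hxj).symm
    · rfl
    · exact H j hj k h hxk
  have main (i : ι) : (#(c i).2 < κ ∧ ∀ j, r j i → EqOn (c i).1 (c j).1 (c j).2) ∧
      ∀ h, EqOn h (c i).1 (c i).2 → h ∈ U i := by
    induction i using wf.induction with
    | _ i ih =>
    have hsmall : #(glue fun j : {j // r j i} => c j).2 < κ :=
      (card_iUnion_lt_iff_forall_of_isRegular hκ (hseg i)).2 fun j => (ih j j.2).1.1
    have hci := hc i
    simp only [step, dif_pos hsmall] at hci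
    rw [hci]
    refine ⟨⟨ht .., fun j hj x hx => ?_⟩, hgU i _ _ hsmall⟩
    refine (hgf i _ _ hsmall (mem_iUnion.2 ⟨⟨j, hj⟩, hx⟩)).trans ?_
    exact glue_eqOn (c := fun j : {j // r j i} => c j)
      (fun j k => agree (P := (r · i)) (fun i' hi' => (ih i' hi').1.2) j k j.2 k.2) ⟨j, hj⟩ hx
  refine ⟨(glue c).1, mem_iInter.2 fun i => (main i).2 _ ?_⟩
  exact glue_eqOn (fun j k => agree (P := fun _ => True) (fun i _ => (main i).1.2) j k trivial
    trivial) i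

theorem lt_spaceBaire {κ : Cardinal.{u}} (hκ : κ.IsRegular) {θ : Type u} (hθ : κ ≤ #θ) :
    κ < spaceBaire κ θ := by
  obtain ⟨F, hF, hFU, hF'⟩ := exists_family_eq_spaceBaire hκ.aleph0_le hθ
  by_contra! h
  have := nonempty_iInter_of_isDenseOpen hκ (hF.trans_le h) (U := fun U : F => U.1)
    fun U => hFU U U.2
  rw [← sInter_eq_iInter, hF'] at this
  exact not_nonempty_empty this

theorem spaceBaire_anti {κ : Cardinal.{u}} (hκ : ℵ₀ ≤ κ) {θ θ' : Type u} (hθ : κ ≤ #θ)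
    (hθ' : #θ ≤ #θ') : spaceBaire κ θ' ≤ spaceBaire κ θ := by
  obtain ⟨F, hF, hFU, hF'⟩ := exists_family_eq_spaceBaire hκ hθ
  obtain ⟨j⟩ := hθ'
  rw [← hF]
  exact spaceBaire_le_of_injective hκ j.injective (fun U : F => U.1) (fun U => hFU U U.2)
    (by rw [← sInter_eq_iInter, hF'])

/-- If `κ < μ ≤ 2^ν` for some `ν < κ`, then reading a point as `κ` many blocks of length `ν`
gives `μ` dense open sets with empty intersection. -/
theorem spaceBaire_le_of_le_two_power {κ μ ν : Cardinal.{u}} (hκ : ℵ₀ ≤ κ) {θ : Type u}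
    (hθ : κ ≤ #θ) (hν : ν < κ) (hμ : κ < μ) (hμν : μ ≤ 2 ^ ν) : spaceBaire κ θ ≤ μ := by
  classical
  obtain ⟨e⟩ : Nonempty (μ.out ↪ (ν.out → Bool)) := by
    rw [← le_def]; simpa using hμν
  obtain ⟨j⟩ : Nonempty (κ.out × ν.out ↪ θ) := by
    rw [← le_def]
    simpa using (mul_le_of_le hκ le_rfl hν.le).trans hθ
  have key := spaceBaire_le_of_injective hκ j.injective (ι := μ.out)
    (fun s => {f | ∃ i, ∀ x, f (i, x) = e s x}) (fun s => ⟨?_, ?_⟩) ?_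
  · simpa using key
  · rintro f ⟨i, hi⟩
    refine ⟨range fun x => (i, x), mk_range_le.trans_lt (by simpa using hν), fun g hg => ⟨i, ?_⟩⟩
    exact fun x => (hg ⟨x, rfl⟩).trans (hi x)
  · intro f t ht
    obtain ⟨i, hi⟩ : ∃ i, i ∉ Prod.fst '' t := by
      by_contra! h
      have := (mk_image_le (f := Prod.fst) (s := t)).trans_lt ht
      rw [eq_univ_of_forall h, mk_univ, mk_out] at this
      exact this.false
    refine ⟨fun p => if p.1 = i then e s p.2 else f p, ⟨i, fun x => by simp⟩, fun p hp => ?_⟩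
    have : p.1 ≠ i := fun h => hi ⟨p, hp, h⟩
    simp [this]
  · refine eq_empty_of_forall_notMem fun f hf => ?_
    choose i hi using mem_iInter.1 hf
    have : Function.Injective i := fun s s' h => e.injective <| funext fun x => by
      rw [← hi, ← hi, h]
    have := mk_le_of_injective this
    simp only [mk_out] at this
    exact this.not_gt hμ

theorem mk_Iio_ord_lt {κ : Cardinal.{u}} (i : κ.ord.ToType) : #(Iio i) < κ := by
  simpa using mk_Iio_lt i

theorem exists_forall_le_of_mk_lt {κ : Cardinal.{u}} (hκ : κ.IsRegular) {ι : Type u} (hι : #ι < κ)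
    (i : ι → κ.ord.ToType) : ∃ j, ∀ l, i l ≤ j := by
  by_contra! h
  have := (card_iUnion_lt_iff_forall_of_isRegular hκ hι).2 fun l => mk_Iio_ord_lt (i l)
  rw [eq_univ_of_forall (s := ⋃ l, Iio (i l)) fun j => mem_iUnion.2 (h j), mk_univ, mk_ord_toType] at this
  exact this.false

theorem exists_mk_Iio_eq {κ ν : Cardinal.{u}} (hν : ν < κ) : ∃ i : κ.ord.ToType, #(Iio i) = ν := by
  have h : ν.ord < Ordinal.type ((· < ·) : κ.ord.ToType → κ.ord.ToType → Prop) := by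
    simpa using hν
  let r : κ.ord.ToType → κ.ord.ToType → Prop := (· < ·)
  have : IsWellOrder κ.ord.ToType r := isWellOrder_lt
  refine ⟨Ordinal.enum r ⟨ν.ord, h⟩, ?_⟩
  have := Ordinal.card_typein (r := r) (Ordinal.enum r ⟨ν.ord, h⟩)
  rw [Ordinal.typein_enum, card_ord] at this
  exact this.symm

theorem le_two_powerlt (κ : Cardinal.{u}) : κ ≤ 2 ^< κ := by
  by_contra! h
  exact (le_powerlt 2 h).not_gt (cantor _)

theorem two_powerlt_power_le {κ ν : Cardinal.{u}} (hκ : κ.IsRegular) (hν : ν < κ) :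
    (2 ^< κ) ^ ν ≤ 2 ^< κ := by
  have hinf : ℵ₀ ≤ 2 ^< κ := hκ.aleph0_le.trans (le_two_powerlt κ)
  let C := {s : Set κ.ord.ToType // ∃ j, s ⊆ Iio j}
  have hC : 2 ^< κ ≤ #C := by
    refine powerlt_le.2 fun x hx => ?_
    obtain ⟨i, rfl⟩ := exists_mk_Iio_eq hx
    rw [← mk_set]
    exact mk_le_of_injective (f := fun s : Set (Iio i) =>
      (⟨(↑) '' s, i, Subtype.coe_image_subset _ s⟩ : C))
      fun s t h => Subtype.val_injective.image_injective (congrArg Subtype.val h)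
  have hsurj : Function.Surjective fun (p : Σ j : κ.ord.ToType, ν.out → Set (Iio j)) (l : ν.out) =>
      (⟨(↑) '' p.2 l, p.1, Subtype.coe_image_subset _ _⟩ : C) := by
    intro c
    obtain ⟨j, hj⟩ := exists_forall_le_of_mk_lt hκ (by simpa using hν) fun l => (c l).2.choose
    refine ⟨⟨j, fun l => (↑) ⁻¹' (c l).1⟩, funext fun l => Subtype.ext ?_⟩
    simp only [Subtype.image_preimage_coe]
    exact inter_eq_right.2 ((c l).2.choose_spec.trans (Iio_subset_Iio (hj l)))
  calc (2 ^< κ) ^ ν ≤ #C ^ ν := power_le_power_right hC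
    _ = #(ν.out → C) := by simp
    _ ≤ #(Σ j : κ.ord.ToType, ν.out → Set (Iio j)) := mk_le_of_surjective hsurj
    _ = sum fun j : κ.ord.ToType => 2 ^ (#(Iio j) * ν) := by simp [power_mul]
    _ ≤ sum fun _ : κ.ord.ToType => 2 ^< κ := sum_le_sum _ _ fun j =>
      le_powerlt 2 (mul_lt_of_lt hκ.aleph0_le (mk_Iio_ord_lt j) hν)
    _ = κ * 2 ^< κ := by simp
    _ ≤ 2 ^< κ := mul_le_of_le hinf (le_two_powerlt κ) le_rfl

theorem exists_subset_range {κ : Cardinal.{u}} {θ : Type u} [Nonempty θ] (s : Set θ) (hs : #s ≤ κ) :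
    ∃ e : κ.out → θ, s ⊆ range e := by
  obtain ⟨j⟩ : Nonempty (s ↪ κ.out) := by rw [← le_def]; simpa using hs
  refine ⟨Function.extend j (↑) fun _ => Classical.arbitrary θ, fun x hx => ⟨j ⟨x, hx⟩, ?_⟩⟩
  exact j.injective.extend_apply _ _ _

/-- A dense open set is decided, densely, by few coordinates. -/
theorem IsDenseOpen.exists_closed_support {κ : Cardinal.{u}} (hκ : κ.IsRegular) {θ : Type u}
    [Nonempty θ] {U : Set (θ → Bool)} (hU : IsDenseOpen κ U) :
    ∃ A : Set θ, #A ≤ 2 ^< κ ∧ ∀ (f : θ → Bool) (s : Set θ), #s < κ → s ⊆ A →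
      ∃ (g : θ → Bool) (t : Set θ), #t < κ ∧ t ⊆ A ∧ EqOn g f s ∧ ∀ h, EqOn h g t → h ∈ U := by
  classical
  have hinf : ℵ₀ ≤ 2 ^< κ := hκ.aleph0_le.trans (le_two_powerlt κ)
  choose! g t ht _ hgf hgU using hU.exists_extension hκ.aleph0_le
  choose! e he using exists_subset_range (κ := κ) (θ := θ)
  let α := Σ i : κ.ord.ToType, (Iio i → Bool) × κ.out
  let fn {i : κ.ord.ToType} (b : Iio i → Bool) (c : Iio i → θ) (x : θ) : Bool :=
    if h : ∃ y, c y = x then b h.choose else false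
  let val : (Σ a : α, Iio a.1 → θ) → θ := fun p =>
    e (t (fn p.1.2.1 p.2) (range p.2)) p.1.2.2
  let W := WType fun a : α => Iio a.1
  let F : W → θ := WType.elim θ val
  have hα : #α ≤ 2 ^< κ := by
    calc #α = sum fun i : κ.ord.ToType => 2 ^ #(Iio i) * κ := by simp [α]
      _ ≤ sum fun _ : κ.ord.ToType => 2 ^< κ := sum_le_sum _ _ fun i =>
        mul_le_of_le hinf (le_powerlt 2 (mk_Iio_ord_lt i)) (le_two_powerlt κ)
      _ = κ * 2 ^< κ := by simp
      _ ≤ 2 ^< κ := mul_le_of_le hinf (le_two_powerlt κ) le_rfl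
  have hW : #W ≤ 2 ^< κ := by
    refine WType.cardinalMk_le_of_le ?_
    calc (sum fun a : α => (2 ^< κ) ^ #(Iio a.1)) ≤ sum fun _ : α => 2 ^< κ :=
        sum_le_sum _ _ fun a => two_powerlt_power_le hκ (mk_Iio_ord_lt a.1)
      _ = #α * 2 ^< κ := by simp
      _ ≤ 2 ^< κ := mul_le_of_le hinf hα le_rfl
  refine ⟨range F, mk_range_le.trans hW, fun f s hs hsF => ?_⟩
  obtain ⟨i, hi⟩ := exists_mk_Iio_eq hs
  obtain ⟨σ⟩ := Cardinal.eq.1 hi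
  choose w hw using fun y : Iio i => hsF (σ y).2
  let c : Iio i → θ := fun y => (σ y).1
  have hrange : range c = s := by
    ext x
    exact ⟨by rintro ⟨y, rfl⟩; exact (σ y).2, fun hx => ⟨σ.symm ⟨x, hx⟩, by simp [c]⟩⟩
  let b : Iio i → Bool := fun y => f (c y)
  have hfn : EqOn (fn b c) f s := by
    intro x hx
    have h : ∃ y, c y = x := by rw [← hrange] at hx; exact hx
    simp only [fn, dif_pos h, b, h.choose_spec]
  refine ⟨g (fn b c) s, t (fn b c) s, ht _ _ hs, fun x hx => ?_, (hgf _ _ hs).trans hfn,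
    hgU _ _ hs⟩
  obtain ⟨k, rfl⟩ := he _ (ht _ _ hs).le hx
  refine ⟨WType.mk (⟨i, b, k⟩ : α) w, ?_⟩
  change e (t (fn b fun y => F (w y)) (range fun y => F (w y))) k = _
  simp only [hw]
  change e (t (fn b c) (range c)) k = _
  rw [hrange]

theorem spaceBaire_le_of_two_powerlt_le {κ : Cardinal.{u}} (hκ : κ.IsRegular) {θ θ' ι : Type u}
    [Nonempty θ] (hθ' : 2 ^< κ ≤ #θ') (hι : #ι ≤ #θ') {U : ι → Set (θ → Bool)}
    (hU : ∀ i, IsDenseOpen κ (U i)) (hU' : ⋂ i, U i = ∅) : spaceBaire κ θ' ≤ #ι := by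
  classical
  have hinf : ℵ₀ ≤ #θ' := (hκ.aleph0_le.trans (le_two_powerlt κ)).trans hθ'
  choose A hA hAU using fun i => (hU i).exists_closed_support hκ
  let B : Set θ := ⋃ i, A i
  obtain ⟨j⟩ : Nonempty (B ↪ θ') := by
    rw [← le_def]
    calc #B ≤ sum fun i => #(A i) := mk_iUnion_le_sum_mk
      _ ≤ sum fun _ : ι => #θ' := sum_le_sum _ _ fun i => (hA i).trans hθ'
      _ = #ι * #θ' := by simp
      _ ≤ #θ' := mul_le_of_le hinf hι le_rfl
  refine spaceBaire_le_of_injective hκ.aleph0_le j.injective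
    (fun i => {f : B → Bool | ∃ (g : θ → Bool) (t : Set θ), #t < κ ∧ t ⊆ A i ∧
      (∀ h, EqOn h g t → h ∈ U i) ∧ ∀ x : B, x.1 ∈ t → f x = g x}) (fun i => ⟨?_, ?_⟩) ?_
  · rintro f ⟨g, t, ht, htA, hgU, hfg⟩
    refine ⟨(↑) ⁻¹' t, (mk_preimage_of_injective _ t Subtype.val_injective).trans_lt ht,
      fun f' hf' => ⟨g, t, ht, htA, hgU, fun x hx => ?_⟩⟩
    rw [hf' hx, hfg x hx]
  · intro f s hs
    let f' : θ → Bool := fun x => if h : x ∈ B then f ⟨x, h⟩ else false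
    obtain ⟨g, t, ht, htA, hgf, hgU⟩ := hAU i f' ((↑) '' s ∩ A i)
      ((mk_le_mk_of_subset inter_subset_left).trans_lt (mk_image_le.trans_lt hs))
      inter_subset_right
    refine ⟨fun x => if x.1 ∈ A i then g x else f x,
      ⟨g, t, ht, htA, hgU, fun x hx => if_pos (htA hx)⟩, fun x hx => ?_⟩
    by_cases h : x.1 ∈ A i
    · simp only [if_pos h]
      rw [hgf ⟨⟨x, hx, rfl⟩, h⟩]
      simp [f']
    · simp [h]
  · refine eq_empty_of_forall_notMem fun f hf => ?_
    let f' : θ → Bool := fun x => if h : x ∈ B then f ⟨x, h⟩ else false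
    have : f' ∈ ⋂ i, U i := mem_iInter.2 fun i => by
      obtain ⟨g, t, ht, htA, hgU, hfg⟩ := mem_iInter.1 hf i
      refine hgU _ fun x hx => ?_
      have hB : x ∈ B := mem_iUnion.2 ⟨i, htA hx⟩
      simp only [f', dif_pos hB]
      exact hfg ⟨x, hB⟩ hx
    rwa [hU'] at this

/-- Fact 4: if `θ₁ ≤ θ₂` and `𝔫_κ^{θ₂} = θ₁`, then `𝔫_κ^{θ₁} = θ₁`. -/
theorem baire_fixed_point (κ θ₁ θ₂ : Cardinal.{u}) (hκ : κ.IsRegular)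
    (h1 : κ ≤ θ₁) (h2 : θ₁ ≤ θ₂) (h : nBaire κ θ₂ = θ₁) :
    nBaire κ θ₁ = θ₁ := by
  have hθ₁ : κ ≤ #θ₁.out := by simpa using h1
  have hθ₂ : κ ≤ #θ₂.out := by simpa using h1.trans h2
  have hlt : κ < θ₁ := h ▸ lt_spaceBaire hκ hθ₂
  refine le_antisymm ?_ ?_
  · by_cases hν : ∃ ν < κ, θ₁ ≤ 2 ^ ν
    · obtain ⟨ν, hν, hle⟩ := hν
      exact spaceBaire_le_of_le_two_power hκ.aleph0_le hθ₁ hν hlt hle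
    · push Not at hν
      obtain ⟨F, hF, hFU, hF'⟩ := exists_family_eq_spaceBaire hκ.aleph0_le hθ₂
      replace hF : #F = θ₁ := hF.trans h
      have : Nonempty θ₂.out := mk_ne_zero_iff.1 (hκ.pos.trans_le hθ₂).ne'
      rw [← hF]
      refine spaceBaire_le_of_two_powerlt_le hκ ?_ ?_ (fun U : F => hFU U U.2) ?_
      · simpa [hF] using powerlt_le.2 fun ν hνκ => (hν ν hνκ).le
      · simp [hF]
      · rw [← sInter_eq_iInter, hF']
  · conv_lhs => rw [← h]
    exact spaceBaire_anti hκ.aleph0_le hθ₁ (by simpa using h2)
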